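/- arXiv:1011.3322 — 2 statements merged into one kernel-verified Lean document; each statement's English description precedes it below -/
import Mathlib

section
/- Let Q be a regular two-sided cell of a fiat category C and let F and G be elements of Q. Then there exists H in Q with F ~_L H and H ~_R G, and there exists K in Q with F ~_R K and K ~_L G. Equivalently, on Q the full relation Q x Q equals the composite of the restricted relations ~_R and ~_L taken in either order. -/
open CategoryTheory CategoryTheory.Limits

universe w v u

attribute [local instance] CategoryTheory.Limits.hasBinaryBiproducts_of_finite_biproducts

namespace CellTwoRep

variable {C : Type u} [Bicategory.{w, v} C]

/-- `G` is a retract (direct summand) of `F` in a hom-category of the bicategory `C`. -/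
def IsSummand {a b : C} (G F : a ⟶ b) : Prop :=
  ∃ (ι : G ⟶ F) (π : F ⟶ G), ι ≫ π = 𝟙 G

/-- Cast a 1-morphism along equalities of objects. -/
def castHom {a a' b b' : C} (h₁ : a = a') (h₂ : b = b') (f : a ⟶ b) : a' ⟶ b' :=
  h₁ ▸ h₂ ▸ f

section Indec

variable [∀ a b : C, Preadditive (a ⟶ b)] [∀ a b : C, HasFiniteBiproducts (a ⟶ b)]

/-- An indecomposable 1-morphism: nonzero, and any decomposition as a biproduct is trivial. -/
def Indec {a b : C} (F : a ⟶ b) : Prop :=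
  ¬ IsZero F ∧ ∀ G H : a ⟶ b, Nonempty (F ≅ G ⊞ H) → IsZero G ∨ IsZero H

end Indec

/-- A 1-morphism of `C` together with its endpoints. -/
structure OneMor (C : Type u) [Bicategory.{w, v} C] where
  src : C
  tgt : C
  mor : src ⟶ tgt

/-- right preorder: `F ≤_R G` iff `G` is a direct summand of `H ∘ F` for some `H`. -/
def leR (F G : OneMor C) : Prop :=
  ∃ (h : F.src = G.src) (H : F.tgt ⟶ G.tgt),
    IsSummand G.mor (castHom h rfl F.mor ≫ H)

/-- left preorder: `F ≤_L G` iff `G` is a direct summand of `F ∘ H` for some `H`. -/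
def leL (F G : OneMor C) : Prop :=
  ∃ (h : F.tgt = G.tgt) (H : G.src ⟶ F.src),
    IsSummand G.mor (H ≫ castHom rfl h F.mor)

/-- two-sided preorder: `F ≤_LR G` iff `G` is a direct summand of `H₂ ∘ F ∘ H₁`. -/
def leLR (F G : OneMor C) : Prop :=
  ∃ (H₁ : G.src ⟶ F.src) (H₂ : F.tgt ⟶ G.tgt),
    IsSummand G.mor (H₁ ≫ F.mor ≫ H₂)

def simR (F G : OneMor C) : Prop := leR F G ∧ leR G F
def simL (F G : OneMor C) : Prop := leL F G ∧ leL G F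
def simLR (F G : OneMor C) : Prop := leLR F G ∧ leLR G F

/-- Isomorphism of 1-morphisms (with possibly different, but equal, endpoints). -/
def IsoM (F G : OneMor C) : Prop :=
  ∃ (h₁ : F.src = G.src) (h₂ : F.tgt = G.tgt), Nonempty (castHom h₁ h₂ F.mor ≅ G.mor)

section Cells

variable [∀ a b : C, Preadditive (a ⟶ b)] [∀ a b : C, HasFiniteBiproducts (a ⟶ b)]

def IndecM (F : OneMor C) : Prop := Indec F.mor

/-- A right cell: the `∼_R`-equivalence class of some indecomposable 1-morphism. -/
def IsRightCell (R : Set (OneMor C)) : Prop :=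
  ∃ F : OneMor C, IndecM F ∧ R = {G | IndecM G ∧ simR F G}

def IsLeftCell (L : Set (OneMor C)) : Prop :=
  ∃ F : OneMor C, IndecM F ∧ L = {G | IndecM G ∧ simL F G}

def IsTwoSidedCell (Q : Set (OneMor C)) : Prop :=
  ∃ F : OneMor C, IndecM F ∧ Q = {G | IndecM G ∧ simLR F G}

/-- The right order on cells. -/
def cellLeR (R R' : Set (OneMor C)) : Prop := ∃ F ∈ R, ∃ G ∈ R', leR F G

/-- The left order on cells. -/
def cellLeL (L L' : Set (OneMor C)) : Prop := ∃ F ∈ L, ∃ G ∈ L', leL F G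

/-- A regular two-sided cell: distinct right cells inside it are incomparable for `≤_R`. -/
def IsRegular (Q : Set (OneMor C)) : Prop :=
  IsTwoSidedCell Q ∧ ∀ R R' : Set (OneMor C), IsRightCell R → IsRightCell R' →
    R ⊆ Q → R' ⊆ Q → R ≠ R' → ¬ cellLeR R R' ∧ ¬ cellLeR R' R

/-- A strongly regular two-sided cell: regular, and every left cell meets every right cell
inside it in exactly one isomorphism class. -/
def IsStronglyRegular (Q : Set (OneMor C)) : Prop :=
  IsRegular Q ∧ ∀ L R : Set (OneMor C), IsLeftCell L → IsRightCell R → L ⊆ Q → R ⊆ Q →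
    ∃ F, F ∈ L ∩ R ∧ ∀ G, G ∈ L ∩ R → IsoM F G

end Cells

/-- All the axioms of a fiat (`k`-finitary with involution and adjunctions) 2-category,
on top of a strict bicategory whose hom-categories are additive and `k`-linear. -/
structure FiatAxioms (k : Type*) [Field k] [IsAlgClosed k]
    (C : Type u) [Bicategory.{w, v} C] [Bicategory.Strict C]
    [∀ a b : C, Preadditive (a ⟶ b)] [∀ a b : C, HasFiniteBiproducts (a ⟶ b)]
    [∀ a b : C, Linear k (a ⟶ b)] : Type (max u v w) where
  /-- finitely many objects -/
  finObj : Finite C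
  /-- each hom-category is idempotent complete -/
  idemComplete : ∀ a b : C, IsIdempotentComplete (a ⟶ b)
  /-- finite-dimensional spaces of 2-morphisms -/
  finDim : ∀ (a b : C) (f g : a ⟶ b), FiniteDimensional k (f ⟶ g)
  /-- finitely many isomorphism classes of indecomposable 1-morphisms -/
  finIndec : ∀ a b : C, ∃ (n : ℕ) (ι : Fin n → (a ⟶ b)),
      ∀ F : a ⟶ b, Indec F → ∃ i, Nonempty (F ≅ ι i)
  /-- each identity 1-morphism is indecomposable -/
  idIndec : ∀ a : C, Indec (𝟙 a)
  /-- horizontal composition is additive in the second variable -/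
  whiskerLeft_add : ∀ {a b c : C} (f : a ⟶ b) {g h : b ⟶ c} (η θ : g ⟶ h),
      Bicategory.whiskerLeft f (η + θ) =
        Bicategory.whiskerLeft f η + Bicategory.whiskerLeft f θ
  /-- horizontal composition is additive in the first variable -/
  whiskerRight_add : ∀ {a b c : C} {f g : a ⟶ b} (η θ : f ⟶ g) (h : b ⟶ c),
      Bicategory.whiskerRight (η + θ) h =
        Bicategory.whiskerRight η h + Bicategory.whiskerRight θ h
  /-- the involution on 1-morphisms -/
  star : ∀ {a b : C}, (a ⟶ b) → (b ⟶ a)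
  /-- the involution on 2-morphisms -/
  star2 : ∀ {a b : C} {f g : a ⟶ b}, (f ⟶ g) → (star f ⟶ star g)
  star2_id : ∀ {a b : C} (f : a ⟶ b), star2 (𝟙 f) = 𝟙 (star f)
  star2_comp : ∀ {a b : C} {f g h : a ⟶ b} (η : f ⟶ g) (θ : g ⟶ h),
      star2 (η ≫ θ) = star2 η ≫ star2 θ
  /-- the involution is a weak anti-homomorphism -/
  starComp : ∀ {a b c : C} (f : a ⟶ b) (g : b ⟶ c),
      Nonempty (star (f ≫ g) ≅ star g ≫ star f)
  starId : ∀ a : C, Nonempty (star (𝟙 a) ≅ 𝟙 a)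
  /-- the involution is weakly involutive -/
  starStar : ∀ {a b : C} (f : a ⟶ b), Nonempty (star (star f) ≅ f)
  /-- adjunctions: every 1-morphism `f` is left adjoint to `star f` -/
  adj : ∀ {a b : C} (f : a ⟶ b), Nonempty (Bicategory.Adjunction f (star f))

open Bicategory

/-- In a finite-dimensional algebra without nontrivial idempotents, `a` or `1 - a` is a unit. -/
lemma isUnit_or_isUnit_one_sub_of_idempotents_trivial (k : Type*) {A : Type*} [Field k] [Ring A]
    [Algebra k A] [FiniteDimensional k A]
    (h : ∀ e : A, IsIdempotentElem e → e = 0 ∨ e = 1) (a : A) :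
    IsUnit a ∨ IsUnit (1 - a) := by
  have : IsMulCommutative (Algebra.adjoin k {a}) := Algebra.isMulCommutative_adjoin k (by simp)
  have : IsArtinianRing (Algebra.adjoin k {a}) := IsArtinianRing.of_finite k _
  let x : Algebra.adjoin k {a} := ⟨a, Algebra.subset_adjoin rfl⟩
  obtain ⟨n, y, hy⟩ := IsArtinian.exists_pow_succ_smul_dvd x (1 : Algebra.adjoin k {a})
  simp only [smul_eq_mul, mul_one, Nat.succ_eq_add_one] at hy
  have hstep : ∀ m : ℕ, x ^ n * (x ^ m * y ^ m) = x ^ n := by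
    intro m
    induction m with
    | zero => simp
    | succ m ih =>
      calc x ^ n * (x ^ (m + 1) * y ^ (m + 1))
          = (x ^ (n + 1) * y) * (x ^ m * y ^ m) := by ring
        _ = x ^ n := by rw [hy, ih]
  have hidem : IsIdempotentElem (x ^ (n + 1) * y ^ (n + 1)) := by
    change _ * _ = _
    calc x ^ (n + 1) * y ^ (n + 1) * (x ^ (n + 1) * y ^ (n + 1))
        = (x ^ n * (x ^ (n + 1) * y ^ (n + 1))) * (x * y ^ (n + 1)) := by ring
      _ = x ^ (n + 1) * y ^ (n + 1) := by rw [hstep]; ring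
  have hval : IsIdempotentElem ((x ^ (n + 1) * y ^ (n + 1) : Algebra.adjoin k {a}) : A) :=
    congrArg Subtype.val hidem
  rcases h _ hval with h0 | h1
  · right
    have h0' : x ^ (n + 1) * y ^ (n + 1) = 0 := Subtype.ext h0
    have hnil : x ^ n = 0 := by rw [← hstep (n + 1), h0', mul_zero]
    exact (IsNilpotent.isUnit_one_sub ⟨n, hnil⟩).map (Algebra.adjoin k {a}).val
  · left
    have h1' : x * (x ^ n * y ^ (n + 1)) = 1 := by
      rw [← mul_assoc, ← pow_succ']
      exact Subtype.ext h1
    exact (IsUnit.of_mul_eq_one _ h1').map (Algebra.adjoin k {a}).val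

/-- A retract whose endomorphism space is at least as large is not proper. -/
lemma retract_eq_id_of_finrank_le (k : Type*) [Field k] {D : Type*} [Category* D] [Preadditive D]
    [Linear k D] {X Y : D} [FiniteDimensional k (X ⟶ X)] [FiniteDimensional k (Y ⟶ Y)]
    (i : X ⟶ Y) (p : Y ⟶ X) (hip : i ≫ p = 𝟙 X)
    (hle : Module.finrank k (Y ⟶ Y) ≤ Module.finrank k (X ⟶ X)) : p ≫ i = 𝟙 Y := by
  let φ : (X ⟶ X) →ₗ[k] (Y ⟶ Y) := Linear.leftComp k Y p ∘ₗ Linear.rightComp k X i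
  have hφ : ∀ f, φ f = p ≫ f ≫ i := fun f => rfl
  have hinj : Function.Injective φ := by
    intro f g hfg
    have h := congrArg (fun t => i ≫ t ≫ p) hfg
    simpa [hφ, hip, reassoc_of% hip] using h
  have hsurj := (LinearMap.injective_iff_surjective_of_finrank_eq_finrank
    (le_antisymm (LinearMap.finrank_le_finrank_of_injective hinj) hle)).1 hinj
  obtain ⟨f, hf⟩ := hsurj (𝟙 Y)
  rw [hφ] at hf
  calc p ≫ i = p ≫ i ≫ p ≫ f ≫ i := by rw [hf, Category.comp_id]
    _ = 𝟙 Y := by rw [reassoc_of% hip, hf]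

lemma IsSummand.of_iso {a b : C} {f g : a ⟶ b} (e : f ≅ g) : IsSummand f g :=
  ⟨e.hom, e.inv, e.hom_inv_id⟩

lemma IsSummand.trans {a b : C} {f g h : a ⟶ b} (hfg : IsSummand f g) (hgh : IsSummand g h) :
    IsSummand f h := by
  obtain ⟨i, p, hip⟩ := hfg
  obtain ⟨j, q, hjq⟩ := hgh
  exact ⟨i ≫ j, q ≫ p, by rw [Category.assoc, reassoc_of% hjq, hip]⟩

lemma IsSummand.whiskerLeft {a b c : C} (h : a ⟶ b) {f g : b ⟶ c} (hfg : IsSummand f g) :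
    IsSummand (h ≫ f) (h ≫ g) := by
  obtain ⟨i, p, hip⟩ := hfg
  exact ⟨h ◁ i, h ◁ p, by rw [← Bicategory.whiskerLeft_comp, hip, Bicategory.whiskerLeft_id]⟩

lemma IsSummand.whiskerRight {a b c : C} {f g : a ⟶ b} (hfg : IsSummand f g) (h : b ⟶ c) :
    IsSummand (f ≫ h) (g ≫ h) := by
  obtain ⟨i, p, hip⟩ := hfg
  exact ⟨i ▷ h, p ▷ h, by rw [← Bicategory.comp_whiskerRight, hip, Bicategory.id_whiskerRight]⟩

/-- The triangle identity exhibits a left adjoint `f` as a direct summand of `f ≫ g ≫ f`. -/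
lemma IsSummand.of_adjunction {a b : C} {f : a ⟶ b} {g : b ⟶ a} (adj : Bicategory.Adjunction f g) :
    IsSummand f (f ≫ g ≫ f) := by
  refine ⟨(λ_ f).inv ≫ adj.unit ▷ f ≫ (α_ f g f).hom, f ◁ adj.counit ≫ (ρ_ f).hom, ?_⟩
  calc _ = (λ_ f).inv ≫ leftZigzag adj.unit adj.counit ≫ (ρ_ f).hom := by bicategory
    _ = 𝟙 f := by rw [adj.left_triangle]; simp

lemma leLR_trans {F G H : OneMor C} (hFG : leLR F G) (hGH : leLR G H) : leLR F H := by
  obtain ⟨h₁, h₂, hG⟩ := hFG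
  obtain ⟨l₁, l₂, hH⟩ := hGH
  refine ⟨l₁ ≫ h₁, h₂ ≫ l₂, hH.trans (((hG.whiskerRight l₂).whiskerLeft l₁).trans
    (IsSummand.of_iso ?_))⟩
  exact whiskerLeftIso l₁ (α_ _ _ _ ≪≫ whiskerLeftIso h₁ (α_ _ _ _)) ≪≫ (α_ _ _ _).symm

lemma leR_refl (F : OneMor C) : leR F F :=
  ⟨rfl, 𝟙 _, IsSummand.of_iso (ρ_ _).symm⟩

lemma leR.leLR {F G : OneMor C} (h : leR F G) : leLR F G := by
  obtain ⟨a, b, f⟩ := F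
  obtain ⟨a', c, g⟩ := G
  obtain ⟨hsrc, x, hx⟩ := h
  obtain rfl : a = a' := hsrc
  exact ⟨𝟙 _, x, hx.trans (IsSummand.of_iso (λ_ _).symm)⟩

lemma leL.leLR {F G : OneMor C} (h : leL F G) : leLR F G := by
  obtain ⟨a, b, f⟩ := F
  obtain ⟨c, b', g⟩ := G
  obtain ⟨htgt, x, hx⟩ := h
  obtain rfl : b = b' := htgt
  exact ⟨x, 𝟙 _, hx.trans (IsSummand.of_iso (whiskerLeftIso x (ρ_ _).symm))⟩

section Cells

variable [∀ a b : C, Preadditive (a ⟶ b)] [∀ a b : C, HasFiniteBiproducts (a ⟶ b)]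

lemma indec_iff {a b : C} [IsIdempotentComplete (a ⟶ b)] (f : a ⟶ b) :
    Indec f ↔ ¬ IsZero f ∧ ∀ e : f ⟶ f, e ≫ e = e → e = 0 ∨ e = 𝟙 f := by
  refine and_congr_right fun _ => ⟨fun h e he => ?_, fun h x y hxy => ?_⟩
  · have he' : (𝟙 f - e) ≫ (𝟙 f - e) = 𝟙 f - e := by simp [he]
    obtain ⟨x, i, p, hip, hpi⟩ := IsIdempotentComplete.idempotents_split f e he
    obtain ⟨y, j, q, hjq, hqj⟩ := IsIdempotentComplete.idempotents_split f (𝟙 f - e) he'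
    have hiq : i ≫ q = 0 := by
      have : i ≫ (𝟙 f - e) = 0 := by simp [← hpi, reassoc_of% hip]
      rw [← hqj] at this
      simpa [hjq] using congrArg (· ≫ q) this
    have hjp : j ≫ p = 0 := by
      have h₁ : j ≫ (𝟙 f - e) = j := by rw [← hqj, reassoc_of% hjq]
      have h₂ : j ≫ e = 0 := by simpa using h₁
      rw [← hpi] at h₂
      simpa [hip] using congrArg (· ≫ p) h₂
    have hsplit : f ≅ x ⊞ y :=
      { hom := biprod.lift p q
        inv := biprod.desc i j
        hom_inv_id := by rw [biprod.lift_desc, hpi, hqj]; abel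
        inv_hom_id := by ext <;> simp [hip, hjq, hiq, hjp] }
    rcases h x y ⟨hsplit⟩ with hx | hy
    · left; rw [← hpi, hx.eq_of_tgt p 0, zero_comp]
    · right; rw [eq_comm, ← sub_eq_zero, ← hqj, hy.eq_of_tgt q 0, zero_comp]
  · obtain ⟨φ⟩ := hxy
    rcases h (φ.hom ≫ biprod.fst ≫ biprod.inl ≫ φ.inv) (by simp) with h0 | h1
    · left
      rw [IsZero.iff_id_eq_zero]
      simpa using congrArg (fun t => biprod.inl ≫ φ.inv ≫ t ≫ φ.hom ≫ biprod.fst) h0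
    · right
      rw [IsZero.iff_id_eq_zero]
      simpa using (congrArg (fun t => biprod.inr ≫ φ.inv ≫ t ≫ φ.hom ≫ biprod.snd) h1).symm

lemma IsTwoSidedCell.mem_of_leLR {Q : Set (OneMor C)} (hQ : IsTwoSidedCell Q) {F K G : OneMor C}
    (hF : F ∈ Q) (hG : G ∈ Q) (hK : IndecM K) (hFK : leLR F K) (hKG : leLR K G) : K ∈ Q := by
  obtain ⟨E, -, rfl⟩ := hQ
  exact ⟨hK, leLR_trans hF.2.1 hFK, leLR_trans hKG hG.2.2⟩

lemma IsTwoSidedCell.leLR {Q : Set (OneMor C)} (hQ : IsTwoSidedCell Q) {F G : OneMor C}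
    (hF : F ∈ Q) (hG : G ∈ Q) : leLR F G := by
  obtain ⟨E, -, rfl⟩ := hQ
  exact leLR_trans hF.2.2 hG.2.1

lemma IsTwoSidedCell.indecM {Q : Set (OneMor C)} (hQ : IsTwoSidedCell Q) {F : OneMor C}
    (hF : F ∈ Q) : IndecM F := by
  obtain ⟨E, -, rfl⟩ := hQ
  exact hF.1

/-- In a regular two-sided cell, elements comparable for `≤_R` are `∼_R`-equivalent. -/
lemma IsRegular.simR_of_leR {Q : Set (OneMor C)} (hQ : IsRegular Q) {F G : OneMor C}
    (hF : F ∈ Q) (hG : G ∈ Q) (h : leR F G) : simR F G := by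
  have hsub : ∀ E ∈ Q, {K | IndecM K ∧ simR E K} ⊆ Q := fun E hE K hK =>
    hQ.1.mem_of_leLR hE hE hK.1 hK.2.1.leLR hK.2.2.leLR
  have hF' := hQ.1.indecM hF
  have hG' := hQ.1.indecM hG
  have hGG : G ∈ {K | IndecM K ∧ simR G K} := ⟨hG', leR_refl G, leR_refl G⟩
  by_cases heq : {K | IndecM K ∧ simR F K} = {K | IndecM K ∧ simR G K}
  · rw [← heq] at hGG
    exact hGG.2
  · exact absurd ⟨F, ⟨hF', leR_refl F, leR_refl F⟩, G, hGG, h⟩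
      (hQ.2 _ _ ⟨F, hF', rfl⟩ ⟨G, hG', rfl⟩ (hsub F hF) (hsub G hG) heq).1

end Cells

namespace FiatAxioms

variable {k : Type*} [Field k] [IsAlgClosed k]
  [Bicategory.Strict C]
  [∀ a b : C, Preadditive (a ⟶ b)] [∀ a b : C, HasFiniteBiproducts (a ⟶ b)]
  [∀ a b : C, Linear k (a ⟶ b)]

lemma whiskerLeft_zero (S : FiatAxioms k C) {a b c : C} (f : a ⟶ b) (g h : b ⟶ c) : f ◁ (0 : g ⟶ h) = 0 := by
  simpa using S.whiskerLeft_add f (0 : g ⟶ h) 0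

lemma zero_whiskerRight (S : FiatAxioms k C) {a b c : C} (f g : a ⟶ b) (h : b ⟶ c) : (0 : f ⟶ g) ▷ h = 0 := by
  simpa using S.whiskerRight_add (0 : f ⟶ g) 0 h

/-- If `𝟙 x` is the sum of two morphisms factoring through `y` and `z`, then an indecomposable
summand of `h ≫ x` is a summand of `h ≫ y` or of `h ≫ z`. -/
lemma isSummand_or_isSummand (S : FiatAxioms k C) {a b c : C} {g : a ⟶ c} (hg : Indec g) (h : a ⟶ b)
    {x y z : b ⟶ c} (hgx : IsSummand g (h ≫ x))
    (i : y ⟶ x) (p : x ⟶ y) (j : z ⟶ x) (q : x ⟶ z) (hsum : p ≫ i + q ≫ j = 𝟙 x) :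
    IsSummand g (h ≫ y) ∨ IsSummand g (h ≫ z) := by
  have := S.idemComplete a c
  have : FiniteDimensional k (End g) := S.finDim a c g g
  obtain ⟨s, r, hsr⟩ := hgx
  have key : ∀ {t : b ⟶ c} (m : t ⟶ x) (n : x ⟶ t),
      IsUnit (show End g from s ≫ h ◁ (n ≫ m) ≫ r) → IsSummand g (h ≫ t) := by
    intro t m n hu
    obtain ⟨v, hv⟩ := hu.exists_left_inv
    refine ⟨s ≫ h ◁ n, h ◁ m ≫ r ≫ v, ?_⟩
    simpa [End.mul_def] using hv
  have hadd : (show End g from s ≫ h ◁ (p ≫ i) ≫ r) +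
      (show End g from s ≫ h ◁ (q ≫ j) ≫ r) = 1 := by
    change s ≫ h ◁ (p ≫ i) ≫ r + s ≫ h ◁ (q ≫ j) ≫ r = 𝟙 g
    rw [← Preadditive.comp_add, ← Preadditive.add_comp, ← S.whiskerLeft_add, hsum,
      Bicategory.whiskerLeft_id, Category.id_comp, hsr]
  rcases isUnit_or_isUnit_one_sub_of_idempotents_trivial k (A := End g)
    (fun e he => ((indec_iff g).1 hg).2 e he) (show End g from s ≫ h ◁ (p ≫ i) ≫ r) with hu | hu
  · exact Or.inl (key i p hu)
  · rw [← eq_sub_iff_add_eq'.2 hadd] at hu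
    exact Or.inr (key j q hu)

/-- An indecomposable summand of `h ≫ x` is a summand of `h ≫ y` for some indecomposable summand
`y` of `x`. -/
lemma exists_indec_summand (S : FiatAxioms k C) {a b c : C} {g : a ⟶ c} (hg : Indec g) (h : a ⟶ b) {x : b ⟶ c}
    (hgx : IsSummand g (h ≫ x)) :
    ∃ y : b ⟶ c, Indec y ∧ IsSummand y x ∧ IsSummand g (h ≫ y) := by
  have := S.idemComplete b c
  have := S.finDim b c
  obtain ⟨y, ⟨hyx, hgy⟩, hmin⟩ := (InvImage.wf (fun y : b ⟶ c => Module.finrank k (y ⟶ y))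
    wellFounded_lt).has_min {y | IsSummand y x ∧ IsSummand g (h ≫ y)}
    ⟨x, IsSummand.of_iso (Iso.refl x), hgx⟩
  have hfull : ∀ {t : b ⟶ c} (m : t ⟶ y) (n : y ⟶ t), m ≫ n = 𝟙 t → IsSummand g (h ≫ t) →
      n ≫ m = 𝟙 y := fun m n hmn hgt =>
    retract_eq_id_of_finrank_le k m n hmn
      (not_lt.1 (hmin _ ⟨IsSummand.trans ⟨m, n, hmn⟩ hyx, hgt⟩))
  refine ⟨y, (indec_iff y).2 ⟨fun hy => hg.1 ?_, fun e he => ?_⟩, hyx, hgy⟩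
  · obtain ⟨s, r, hsr⟩ := hgy
    rw [IsZero.iff_id_eq_zero, ← hsr, ← Category.id_comp r, ← Bicategory.whiskerLeft_id,
      hy.eq_of_src (𝟙 y) 0, S.whiskerLeft_zero, zero_comp, comp_zero]
  · have he' : (𝟙 y - e) ≫ (𝟙 y - e) = 𝟙 y - e := by simp [he]
    obtain ⟨t, i, p, hip, hpi⟩ := IsIdempotentComplete.idempotents_split y e he
    obtain ⟨t', j, q, hjq, hqj⟩ := IsIdempotentComplete.idempotents_split y (𝟙 y - e) he'
    rcases S.isSummand_or_isSummand hg h hgy i p j q (by rw [hpi, hqj]; abel) with hgt | hgt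
    · right; rw [← hpi, hfull i p hip hgt]
    · left; simpa [hqj] using hfull j q hjq hgt

lemma isSummand_star (S : FiatAxioms k C) {a b : C} {f g : a ⟶ b} (h : IsSummand f g) :
    IsSummand (S.star f) (S.star g) := by
  obtain ⟨i, p, hip⟩ := h
  exact ⟨S.star2 i, S.star2 p, by rw [← S.star2_comp, hip, S.star2_id]⟩

lemma isSummand_star_star (S : FiatAxioms k C) {a b : C} (f : a ⟶ b) : IsSummand (S.star (S.star f)) f :=
  IsSummand.of_iso (S.starStar f).some

lemma isSummand_of_star_star (S : FiatAxioms k C) {a b : C} (f : a ⟶ b) : IsSummand f (S.star (S.star f)) :=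
  IsSummand.of_iso (S.starStar f).some.symm

lemma isSummand_star_comp (S : FiatAxioms k C) {a b c : C} {f : a ⟶ c} {g : a ⟶ b} {h : b ⟶ c}
    (hf : IsSummand f (g ≫ h)) : IsSummand (S.star f) (S.star h ≫ S.star g) :=
  (S.isSummand_star hf).trans (IsSummand.of_iso (S.starComp g h).some)

/-- Conjugation along the adjunctions identifies the idempotents of `f` and of `star f`. -/
lemma indec_star (S : FiatAxioms k C) {a b : C} {f : a ⟶ b} (hf : Indec f) : Indec (S.star f) := by
  have := S.idemComplete a b
  have := S.idemComplete b a
  obtain ⟨adj⟩ := S.adj f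
  have hzero : Bicategory.conjugateEquiv adj adj 0 = 0 := by
    simp [Bicategory.conjugateEquiv_apply', S.zero_whiskerRight, S.whiskerLeft_zero]
  obtain ⟨hne, hid⟩ := (indec_iff f).1 hf
  refine (indec_iff _).2 ⟨fun hz => hne ?_, fun e he => ?_⟩
  · rw [IsZero.iff_id_eq_zero] at hz ⊢
    apply (Bicategory.conjugateEquiv adj adj).injective
    rw [Bicategory.conjugateEquiv_id, hzero, hz]
  · obtain ⟨d, rfl⟩ := (Bicategory.conjugateEquiv adj adj).surjective e
    rw [Bicategory.conjugateEquiv_comp] at he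
    rcases hid d ((Bicategory.conjugateEquiv adj adj).injective he) with rfl | rfl
    · exact Or.inl hzero
    · exact Or.inr (Bicategory.conjugateEquiv_id adj)

lemma star_mem (S : FiatAxioms k C) {Q : Set (OneMor C)} (hQ : IsTwoSidedCell Q) {F : OneMor C} (hF : F ∈ Q) :
    (⟨F.tgt, F.src, S.star F.mor⟩ : OneMor C) ∈ Q := by
  refine hQ.mem_of_leLR hF hF (S.indec_star (hQ.indecM hF)) ⟨S.star F.mor, S.star F.mor, ?_⟩
    ⟨F.mor, F.mor, IsSummand.of_adjunction (S.adj F.mor).some⟩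
  exact (IsSummand.of_adjunction (S.adj (S.star F.mor)).some).trans
    (((S.isSummand_star_star F.mor).whiskerRight _).whiskerLeft _)

/-- In a regular two-sided cell, elements comparable for `≤_L` are `∼_L`-equivalent. -/
lemma simL_of_leL (S : FiatAxioms k C) {Q : Set (OneMor C)} (hQ : IsRegular Q) {F G : OneMor C}
    (hF : F ∈ Q) (hG : G ∈ Q) (h : leL F G) : simL F G := by
  have hF' := S.star_mem hQ.1 hF
  have hG' := S.star_mem hQ.1 hG
  refine ⟨h, ?_⟩
  obtain ⟨a, b, f⟩ := F
  obtain ⟨c, b', g⟩ := G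
  obtain ⟨htgt, x, hx⟩ := h
  obtain rfl : b = b' := htgt
  obtain ⟨_, y, hy⟩ := (hQ.simR_of_leR hF' hG' ⟨rfl, S.star x, S.isSummand_star_comp hx⟩).2
  exact ⟨rfl, S.star y, (S.isSummand_of_star_star f).trans ((S.isSummand_star_comp hy).trans
    ((S.isSummand_star_star g).whiskerLeft _))⟩

lemma exists_simR_simL (S : FiatAxioms k C) {Q : Set (OneMor C)} (hQ : IsRegular Q) {F G : OneMor C}
    (hF : F ∈ Q) (hG : G ∈ Q) : ∃ K ∈ Q, simR F K ∧ simL K G := by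
  obtain ⟨h₁, h₂, hFG⟩ := hQ.1.leLR hF hG
  obtain ⟨y, hy, hyF, hGy⟩ := S.exists_indec_summand (hQ.1.indecM hG) h₁ hFG
  let K : OneMor C := ⟨F.src, G.tgt, y⟩
  have hFK : leR F K := ⟨rfl, h₂, hyF⟩
  have hKG : leL K G := ⟨rfl, h₁, hGy⟩
  have hK : K ∈ Q := hQ.1.mem_of_leLR hF hG hy hFK.leLR hKG.leLR
  exact ⟨K, hK, hQ.simR_of_leR hF hK hFK, S.simL_of_leL hQ hK hG hKG⟩

end FiatAxioms

/-- Let `Q` be a regular two-sided cell and `F, G ∈ Q`. Then there is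
`H ∈ Q` with `F ∼_L H` and `H ∼_R G`, and there is `K ∈ Q` with `F ∼_R K` and
`K ∼_L G`; i.e. on `Q` the full relation equals the composite of `∼_R` and `∼_L`
taken in either order. -/
theorem regular_cell_full_relation
    (k : Type*) [Field k] [IsAlgClosed k]
    {C : Type u} [Bicategory.{w, v} C] [Bicategory.Strict C]
    [∀ a b : C, Preadditive (a ⟶ b)] [∀ a b : C, HasFiniteBiproducts (a ⟶ b)]
    [∀ a b : C, Linear k (a ⟶ b)]
    (S : FiatAxioms k C)
    (Q : Set (OneMor C)) (hQ : IsRegular Q)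
    (F G : OneMor C) (hF : F ∈ Q) (hG : G ∈ Q) :
    (∃ H ∈ Q, simL F H ∧ simR H G) ∧ (∃ K ∈ Q, simR F K ∧ simL K G) := by
  refine ⟨?_, S.exists_simR_simL hQ hF hG⟩
  obtain ⟨H, hH, hR, hL⟩ := S.exists_simR_simL hQ hG hF
  exact ⟨H, hH, hL.symm, hR.symm⟩

end CellTwoRep
end

section
/- Let C be a fiat category with involution *, let i and j be objects of C, let F, H: i -> j be 1-morphisms and let G: i -> i be an indecomposable 1-morphism with G isomorphic to G*. If H* o F is isomorphic to G^{⊕m} and F* o H is isomorphic to G^{⊕m'} for natural numbers m and m', then m = m'. -/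
open CategoryTheory CategoryTheory.Limits

universe w v u

attribute [local instance] CategoryTheory.Limits.hasBinaryBiproducts_of_finite_biproducts

namespace CellTwoRep

variable {C : Type u} [Bicategory.{w, v} C]

/-- Conjugation of 2-morphisms between left adjoints, as an additive map. -/
def FiatAxioms.conjugateHom {k : Type*} [Field k] [IsAlgClosed k]
    {C : Type u} [Bicategory.{w, v} C] [Bicategory.Strict C]
    [∀ a b : C, Preadditive (a ⟶ b)] [∀ a b : C, HasFiniteBiproducts (a ⟶ b)]
    [∀ a b : C, Linear k (a ⟶ b)] (S : FiatAxioms k C)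
    {a b : C} {l₁ l₂ : a ⟶ b} {r₁ r₂ : b ⟶ a}
    (adj₁ : Bicategory.Adjunction l₁ r₁) (adj₂ : Bicategory.Adjunction l₂ r₂) :
    (l₂ ⟶ l₁) →+ (r₁ ⟶ r₂) :=
  AddMonoidHom.mk' (Bicategory.conjugateEquiv adj₁ adj₂) fun α β => by
    simp only [Bicategory.conjugateEquiv_apply', S.whiskerLeft_add, S.whiskerRight_add,
      Preadditive.add_comp, Preadditive.comp_add]

/-- The involution preserves finite direct sums of copies of a 1-morphism. -/
theorem FiatAxioms.nonempty_star_biproduct_iso {k : Type*} [Field k] [IsAlgClosed k]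
    {C : Type u} [Bicategory.{w, v} C] [Bicategory.Strict C]
    [∀ a b : C, Preadditive (a ⟶ b)] [∀ a b : C, HasFiniteBiproducts (a ⟶ b)]
    [∀ a b : C, Linear k (a ⟶ b)] (S : FiatAxioms k C)
    {a b : C} (G : a ⟶ b) (m : ℕ) :
    Nonempty (S.star (⨁ fun _ : Fin m => G) ≅ ⨁ fun _ : Fin m => S.star G) := by
  obtain ⟨adjG⟩ := S.adj G
  obtain ⟨adjB⟩ := S.adj (⨁ fun _ : Fin m => G)
  have hcomp (p q : Fin m) :
      S.conjugateHom adjG adjB (biproduct.π (fun _ : Fin m => G) p) ≫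
          S.conjugateHom adjB adjG (biproduct.ι (fun _ : Fin m => G) q) =
        S.conjugateHom adjG adjG
          (biproduct.ι (fun _ : Fin m => G) q ≫ biproduct.π (fun _ : Fin m => G) p) :=
    Bicategory.conjugateEquiv_comp adjG adjB adjG _ _
  let bicone : Bicone (fun _ : Fin m => S.star G) :=
    { pt := S.star (⨁ fun _ : Fin m => G)
      π := fun p => S.conjugateHom adjB adjG (biproduct.ι (fun _ : Fin m => G) p)
      ι := fun p => S.conjugateHom adjG adjB (biproduct.π (fun _ : Fin m => G) p)
      ι_π := fun p q => by
        rw [hcomp]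
        split_ifs with h
        · subst h
          rw [biproduct.ι_π_self]
          exact Bicategory.conjugateEquiv_id adjG
        · rw [biproduct.ι_π_ne _ (Ne.symm h), map_zero] }
  have total : ∑ p, bicone.π p ≫ bicone.ι p = 𝟙 bicone.pt := by
    have hp (p : Fin m) : bicone.π p ≫ bicone.ι p =
        S.conjugateHom adjB adjB
          (biproduct.π (fun _ : Fin m => G) p ≫ biproduct.ι (fun _ : Fin m => G) p) :=
      Bicategory.conjugateEquiv_comp adjB adjG adjB _ _
    rw [Finset.sum_congr rfl fun p _ => hp p, ← map_sum, biproduct.total]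
    exact Bicategory.conjugateEquiv_id adjB
  exact ⟨biproduct.uniqueUpToIso _ (isBilimitOfTotal bicone total)⟩

/-- Morphisms into a finite direct sum are families of morphisms. -/
noncomputable def homBiproductEquiv (k : Type*) [Field k] {D : Type*} [Category* D]
    [Preadditive D] [HasFiniteBiproducts D] [Linear k D] (X G : D) (m : ℕ) :
    (X ⟶ ⨁ fun _ : Fin m => G) ≃ₗ[k] (Fin m → (X ⟶ G)) where
  toFun f p := f ≫ biproduct.π _ p
  map_add' f g := by ext p; simp
  map_smul' c f := by ext p; simp
  invFun f := biproduct.lift f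
  left_inv f := by ext p; simp
  right_inv f := by ext p; simp

/-- In a linear category with finite-dimensional endomorphism spaces, the multiplicity of a
nonzero object in a direct sum of its copies is well defined. -/
theorem eq_of_biproduct_iso (k : Type*) [Field k] {D : Type*} [Category* D]
    [Preadditive D] [HasFiniteBiproducts D] [Linear k D] {G : D} [FiniteDimensional k (G ⟶ G)]
    (hG : ¬ IsZero G) {m n : ℕ}
    (e : (⨁ fun _ : Fin m => G) ≅ ⨁ fun _ : Fin n => G) : m = n := by
  have : Nontrivial (G ⟶ G) := ⟨𝟙 G, 0, fun h => hG ((IsZero.iff_id_eq_zero G).2 h)⟩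
  have h := ((homBiproductEquiv k G G m).symm ≪≫ₗ Linear.homCongr k (Iso.refl G) e ≪≫ₗ
    homBiproductEquiv k G G n).finrank_eq
  simp only [Module.finrank_pi_fintype, Finset.sum_const, Finset.card_univ, Fintype.card_fin,
    smul_eq_mul] at h
  exact Nat.eq_of_mul_eq_mul_right Module.finrank_pos h

/-- In a fiat category, let `F, H : i ⟶ j` and let `G : i ⟶ i` be
indecomposable with `G ≅ G*`.  If `H* ∘ F ≅ G^{⊕m}` and `F* ∘ H ≅ G^{⊕m'}`, then
`m = m'`. (Composites are written diagrammatically: `H* ∘ F = F ≫ H*`.) -/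
theorem multiplicity_symmetric
    (k : Type*) [Field k] [IsAlgClosed k]
    {C : Type u} [Bicategory.{w, v} C] [Bicategory.Strict C]
    [∀ a b : C, Preadditive (a ⟶ b)] [∀ a b : C, HasFiniteBiproducts (a ⟶ b)]
    [∀ a b : C, Linear k (a ⟶ b)]
    (S : FiatAxioms k C)
    (i j : C) (F H : i ⟶ j) (G : i ⟶ i)
    (hG : Indec G) (hGstar : Nonempty (G ≅ S.star G))
    (m m' : ℕ)
    (e₁ : Nonempty ((F ≫ S.star H) ≅ ⨁ (fun _ : Fin m => G)))
    (e₂ : Nonempty ((H ≫ S.star F) ≅ ⨁ (fun _ : Fin m' => G))) :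
    m = m' := by
  obtain ⟨e₁⟩ := e₁
  obtain ⟨e₂⟩ := e₂
  obtain ⟨g⟩ := hGstar
  obtain ⟨c⟩ := S.starComp F (S.star H)
  obtain ⟨s⟩ := S.starStar H
  obtain ⟨b⟩ := S.nonempty_star_biproduct_iso G m
  have := S.finDim i i G G
  let starE : S.star (F ≫ S.star H) ≅ S.star (⨁ fun _ : Fin m => G) :=
    { hom := S.star2 e₁.hom
      inv := S.star2 e₁.inv
      hom_inv_id := by rw [← S.star2_comp, e₁.hom_inv_id, S.star2_id]
      inv_hom_id := by rw [← S.star2_comp, e₁.inv_hom_id, S.star2_id] }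
  exact eq_of_biproduct_iso k hG.1 <|
    biproduct.mapIso (fun _ => g) ≪≫ b.symm ≪≫ starE.symm ≪≫ c ≪≫
      Bicategory.whiskerRightIso s (S.star F) ≪≫ e₂

end CellTwoRep
end
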